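/- Let the loss L: ℝ → ℝ be proper, continuous and convex, and fix λ > 0. Then, for the Wasserstein type-2 cost, the optimal value of the distributionally regularized problem min_{θ∈Θ} sup_{Q} E_Q[L(Y − θᵀX)] − λ W_c(Q,P_n), where the supremum runs over all probability measures Q on ℝ^{d+1}, equals the optimal value of the minimax problem min_{θ∈Θ} sup_{u∈ℝⁿ} (1/n)Σ_{i=1}^n [u_i(y_i − θᵀx_i) + (u_i²/(4λ))‖θ‖² − L*(u_i)], where L* is the convex conjugate of L. -/

import Mathlib

/-!
For each fixed `θ` the two inner suprema agree. Write `r i = y i - ⟪θ, x i⟫`.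

* From the dual to the primal (`dual_le_dreObjE`): given multipliers `u i` with finite conjugate,
  move the `i`-th atom to `z i = x i - (u i / (2λ)) θ`. The Fenchel-Young inequality shows that the
  discrete measure `(1/n) ∑ δ_(z i, y i)` does at least as well as the dual value at `u`.
* Displaced atoms are dominated by the dual (`atoms_le_dual`): taking `u i` a subgradient of `L` at
  `y i - ⟪θ, z i⟫`, the Fenchel equality and `-u⟪θ, w⟫ - λ‖w‖² ≤ u²‖θ‖²/(4λ)` bound
  `(1/n) ∑ (L (y i - ⟪θ, z i⟫) - λ‖z i - x i‖²)` by the dual value, for all `z`.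
* From the primal to the dual (`dreObjE_le_of_atoms`): if all these discrete values are at most
  `R < ∞`, then `h (x, y) = sup_z L (y - ⟪θ, z⟫) - λ‖z - x‖²` is finite at the atoms and its
  `P_n`-mean is at most `R`. Under any coupling of finite cost the response is not moved, hence
  `L (y - ⟪θ, z⟫) ≤ h + λ‖z - x‖²` almost surely, and integration gives the bound. Together with an
  affine minorant of `L` this inequality also makes the loss integrable, so that the Bochner
  integral in the objective is the genuine expectation. When the dual value is `⊤` there is
  nothing to prove.
-/


open MeasureTheory ProbabilityTheory Filter ENNReal
open scoped RealInnerProductSpace Topology NNReal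

noncomputable section

def couplings {α : Type*} [MeasurableSpace α] (μ ν : Measure α) :
    Set (Measure (α × α)) :=
  {γ | γ.map Prod.fst = μ ∧ γ.map Prod.snd = ν}

noncomputable def transportDiscrepancy {α : Type*} [MeasurableSpace α]
    (c : α → α → ℝ≥0∞) (μ ν : Measure α) : ℝ≥0∞ :=
  ⨅ γ ∈ couplings μ ν, ∫⁻ z, c z.1 z.2 ∂γ

noncomputable def droCost (p d : ℕ) (a b : EuclideanSpace ℝ (Fin d) × ℝ) : ℝ≥0∞ :=
  ENNReal.ofReal (‖a.1 - b.1‖ ^ p) + ⊤ * ENNReal.ofReal |a.2 - b.2|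

noncomputable def empiricalMeasure {d n : ℕ} (x : Fin n → EuclideanSpace ℝ (Fin d))
    (y : Fin n → ℝ) : Measure (EuclideanSpace ℝ (Fin d) × ℝ) :=
  (n : ℝ≥0∞)⁻¹ • ∑ i, Measure.dirac (x i, y i)

/-- Convex conjugate `L*(v) = sup_u (uv − L(u))`, valued in `EReal`. -/
noncomputable def conjE (L : ℝ → ℝ) (v : ℝ) : EReal :=
  ⨆ u : ℝ, ((u * v - L u : ℝ) : EReal)

/-- Objective of the distributionally regularized problem:
`sup_Q E_Q[L(Y − θᵀX)] − λ W_c(Q, P_n)`, valued in `EReal`;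
the supremum runs over all probability measures on `ℝ^d × ℝ`. -/
noncomputable def dreObjE {d n : ℕ} (x : Fin n → EuclideanSpace ℝ (Fin d))
    (y : Fin n → ℝ) (lam : ℝ) (L : ℝ → ℝ) (θ : EuclideanSpace ℝ (Fin d)) : EReal :=
  ⨆ (Q : {Q : Measure (EuclideanSpace ℝ (Fin d) × ℝ) // IsProbabilityMeasure Q}),
    (((∫ z, L (z.2 - ⟪θ, z.1⟫) ∂(Q : Measure (EuclideanSpace ℝ (Fin d) × ℝ)) : ℝ) : EReal)
      - ((lam : ℝ) : EReal) *
          (transportDiscrepancy (droCost 2 d) (Q : Measure (EuclideanSpace ℝ (Fin d) × ℝ))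
            (empiricalMeasure x y)).toEReal)

lemma exists_subgradient {L : ℝ → ℝ} (hL : ConvexOn ℝ Set.univ L) (s : ℝ) :
    ∃ v : ℝ, ∀ t : ℝ, v * (t - s) + L s ≤ L t := by
  have hs : s ∈ interior (Set.univ : Set ℝ) := by simp
  refine ⟨derivWithin L (Set.Ioi s) s, fun t => ?_⟩
  rcases lt_trichotomy t s with h | h | h
  · have h1 := hL.slope_le_leftDeriv_of_mem_interior (Set.mem_univ t) hs h
    have h2 := h1.trans (hL.leftDeriv_le_rightDeriv_of_mem_interior hs)
    rw [slope_def_field, div_le_iff₀ (by linarith)] at h2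
    linarith
  · simp [h]
  · have h1 := hL.rightDeriv_le_slope_of_mem_interior hs (Set.mem_univ t) h
    rw [slope_def_field, le_div_iff₀ (by linarith)] at h1
    linarith

lemma EReal_coe_sum {ι : Type*} (s : Finset ι) (f : ι → ℝ) :
    ((∑ i ∈ s, f i : ℝ) : EReal) = ∑ i ∈ s, ((f i : ℝ) : EReal) :=
  map_sum (⟨⟨Real.toEReal, EReal.coe_zero⟩, EReal.coe_add⟩ : ℝ →+ EReal) f s

lemma EReal_sum_eq_bot {ι : Type*} [Fintype ι] (f : ι → EReal) {i : ι} (hi : f i = ⊥) :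
    ∑ j, f j = ⊥ := by
  classical
  rw [← Finset.add_sum_erase Finset.univ f (Finset.mem_univ i), hi, EReal.bot_add]

/-- Equality case of the Fenchel-Young inequality. -/
lemma conjE_eq_of_subgradient {L : ℝ → ℝ} {s v : ℝ} (h : ∀ t : ℝ, v * (t - s) + L s ≤ L t) :
    conjE L v = ((s * v - L s : ℝ) : EReal) := by
  refine le_antisymm (iSup_le fun t => ?_) (le_iSup (fun u : ℝ => ((u * v - L u : ℝ) : EReal)) s)
  exact_mod_cast (by linarith [h t] : t * v - L t ≤ s * v - L s)

/-- Maximising `-v⟪θ, w⟫ - λ‖w‖²` over the displacement `w`. -/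
lemma neg_inner_sub_sq_le {E : Type*} [NormedAddCommGroup E] [InnerProductSpace ℝ E]
    {lam : ℝ} (hlam : 0 < lam) (v : ℝ) (θ w : E) :
    -(v * ⟪θ, w⟫) - lam * ‖w‖ ^ 2 ≤ v ^ 2 / (4 * lam) * ‖θ‖ ^ 2 := by
  have h1 : -(v * ⟪θ, w⟫) ≤ |v| * (‖θ‖ * ‖w‖) := by
    refine (neg_le_abs _).trans ?_
    rw [abs_mul]
    exact mul_le_mul_of_nonneg_left (abs_real_inner_le_norm θ w) (abs_nonneg v)
  have h2 : v ^ 2 / (4 * lam) * ‖θ‖ ^ 2 + lam * ‖w‖ ^ 2 - |v| * (‖θ‖ * ‖w‖)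
      = (|v| * ‖θ‖ - 2 * lam * ‖w‖) ^ 2 / (4 * lam) := by
    rw [← sq_abs v]
    field_simp
    ring
  have h3 : 0 ≤ (|v| * ‖θ‖ - 2 * lam * ‖w‖) ^ 2 / (4 * lam) := by positivity
  linarith

/-- The dual value dominates the value of every displacement of the atoms of `P_n`. -/
lemma atoms_le_dual {d n : ℕ} (x : Fin n → EuclideanSpace ℝ (Fin d)) (y : Fin n → ℝ)
    {lam : ℝ} (hlam : 0 < lam) {L : ℝ → ℝ} (hL : ConvexOn ℝ Set.univ L)
    (θ : EuclideanSpace ℝ (Fin d)) (z : Fin n → EuclideanSpace ℝ (Fin d)) :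
    (((n : ℝ)⁻¹ * ∑ i, (L (y i - ⟪θ, z i⟫) - lam * ‖z i - x i‖ ^ 2) : ℝ) : EReal) ≤
      ⨆ (u : EuclideanSpace ℝ (Fin n)),
        ((((n : ℝ)⁻¹ : ℝ) : EReal) *
          ∑ i, ((((u i) * (y i - ⟪θ, x i⟫) + (u i) ^ 2 / (4 * lam) * ‖θ‖ ^ 2 : ℝ) : EReal)
                - conjE L (u i))) := by
  choose v hv using fun i => exists_subgradient hL (y i - ⟪θ, z i⟫)
  refine le_iSup_of_le (WithLp.toLp 2 v) ?_
  simp only [conjE_eq_of_subgradient (hv _)]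
  simp only [← EReal.coe_sub, ← EReal_coe_sum, ← EReal.coe_mul]
  rw [EReal.coe_le_coe_iff]
  refine mul_le_mul_of_nonneg_left (Finset.sum_le_sum fun i _ => ?_) (by positivity)
  have h := neg_inner_sub_sq_le hlam (v i) θ (z i - x i)
  rw [inner_sub_right] at h
  linarith

lemma measurable_droCost (p d : ℕ) :
    Measurable fun z : (EuclideanSpace ℝ (Fin d) × ℝ) × (EuclideanSpace ℝ (Fin d) × ℝ) =>
      droCost p d z.1 z.2 := by
  unfold droCost
  fun_prop

/-- No measurability of `f` is needed, since the measure is a finite sum of Dirac masses; this is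
used for a supremum over an uncountable family. -/
lemma integrable_empiricalMeasure {d n : ℕ} (hn : 0 < n) (x : Fin n → EuclideanSpace ℝ (Fin d))
    (y : Fin n → ℝ) (f : EuclideanSpace ℝ (Fin d) × ℝ → ℝ) :
    Integrable f (empiricalMeasure x y) := by
  have hn0 : (n : ℝ≥0∞) ≠ 0 := by exact_mod_cast hn.ne'
  refine Integrable.smul_measure ?_ (ENNReal.inv_ne_top.2 hn0)
  exact integrable_finsetSum_measure.2 fun i _ => integrable_dirac (by simp)

lemma integral_empiricalMeasure {d n : ℕ} (x : Fin n → EuclideanSpace ℝ (Fin d))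
    (y : Fin n → ℝ) (f : EuclideanSpace ℝ (Fin d) × ℝ → ℝ) :
    ∫ w, f w ∂(empiricalMeasure x y) = (n : ℝ)⁻¹ * ∑ i, f (x i, y i) := by
  unfold empiricalMeasure
  rw [integral_smul_measure, integral_finsetSum_measure (fun i _ => integrable_dirac (by simp))]
  simp

/-- Fenchel-Young at the displaced atoms `z i = x i - (u i / (2λ)) θ`. -/
lemma dual_le_dreObjE {d n : ℕ} (hn : 0 < n) (x : Fin n → EuclideanSpace ℝ (Fin d))
    (y : Fin n → ℝ) {lam : ℝ} (hlam : 0 < lam) (L : ℝ → ℝ)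
    (θ : EuclideanSpace ℝ (Fin d)) (u : Fin n → ℝ) :
    ((((n : ℝ)⁻¹ : ℝ) : EReal) *
          ∑ i, ((((u i) * (y i - ⟪θ, x i⟫) + (u i) ^ 2 / (4 * lam) * ‖θ‖ ^ 2 : ℝ) : EReal)
                - conjE L (u i))) ≤ dreObjE x y lam L θ := by
  have hn' : (0 : ℝ) < (n : ℝ)⁻¹ := by positivity
  have hn0 : (n : ℝ≥0∞) ≠ 0 := by exact_mod_cast hn.ne'
  by_cases htop : ∃ i, conjE L (u i) = ⊤
  · obtain ⟨i, hi⟩ := htop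
    rw [EReal_sum_eq_bot _ (i := i) (by rw [hi, EReal.sub_top]), EReal.coe_mul_bot_of_pos hn']
    exact bot_le
  push Not at htop
  have hbot : ∀ i, conjE L (u i) ≠ ⊥ := fun i h => by
    have := le_iSup (fun t : ℝ => ((t * u i - L t : ℝ) : EReal)) 0
    change _ ≤ conjE L (u i) at this
    rw [h] at this
    exact EReal.coe_ne_bot _ (le_bot_iff.1 this)
  -- `c i` is the real value of the conjugate at `u i`
  set c : Fin n → ℝ := fun i => (conjE L (u i)).toReal with hc
  have hcE : ∀ i, conjE L (u i) = ((c i : ℝ) : EReal) := fun i =>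
    (EReal.coe_toReal (htop i) (hbot i)).symm
  have hFY : ∀ i t, t * u i - L t ≤ c i := fun i t => by
    have := le_iSup (fun t : ℝ => ((t * u i - L t : ℝ) : EReal)) t
    change _ ≤ conjE L (u i) at this
    rw [hcE] at this
    exact_mod_cast this
  set z : Fin n → EuclideanSpace ℝ (Fin d) := fun i => x i - (u i / (2 * lam)) • θ with hz
  have hzx : ∀ i, ‖z i - x i‖ ^ 2 = (u i / (2 * lam)) ^ 2 * ‖θ‖ ^ 2 := fun i => by
    have : z i - x i = -((u i / (2 * lam)) • θ) := by simp [hz]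
    rw [this, norm_neg, norm_smul, mul_pow, Real.norm_eq_abs, sq_abs]
  have hQ : IsProbabilityMeasure (empiricalMeasure z y) := by
    constructor
    simp [empiricalMeasure, ENNReal.inv_mul_cancel hn0]
  have hint : ∫ w, L (w.2 - ⟪θ, w.1⟫) ∂(empiricalMeasure z y)
      = (n : ℝ)⁻¹ * ∑ i, L (y i - ⟪θ, z i⟫) :=
    integral_empiricalMeasure z y fun w => L (w.2 - ⟪θ, w.1⟫)
  have hW : transportDiscrepancy (droCost 2 d) (empiricalMeasure z y) (empiricalMeasure x y)
      ≤ ENNReal.ofReal ((n : ℝ)⁻¹ * ∑ i, ‖z i - x i‖ ^ 2) := by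
    refine (iInf₂_le ((n : ℝ≥0∞)⁻¹ • ∑ i, Measure.dirac ((z i, y i), (x i, y i))) ?_).trans ?_
    · constructor
      · rw [Measure.map_smul, Measure.map_finset_sum' (by fun_prop)]
        simp [empiricalMeasure, Measure.map_dirac' measurable_fst]
      · rw [Measure.map_smul, Measure.map_finset_sum' (by fun_prop)]
        simp [empiricalMeasure, Measure.map_dirac' measurable_snd]
    · rw [lintegral_smul_measure, lintegral_finsetSum_measure,
        ENNReal.ofReal_mul hn'.le, ENNReal.ofReal_inv_of_pos (by positivity),
        ENNReal.ofReal_sum_of_nonneg (fun i _ => by positivity)]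
      simp [droCost, lintegral_dirac]
  refine le_trans ?_ (le_iSup _ (⟨empiricalMeasure z y, hQ⟩ : {Q // IsProbabilityMeasure Q}))
  simp only [hint, hcE]
  have hW' : (lam : EReal) * (transportDiscrepancy (droCost 2 d) (empiricalMeasure z y)
      (empiricalMeasure x y)).toEReal
      ≤ ((lam * ((n : ℝ)⁻¹ * ∑ i, ‖z i - x i‖ ^ 2) : ℝ) : EReal) := by
    rw [EReal.coe_mul]
    refine mul_le_mul_of_nonneg_left ?_ (by exact_mod_cast hlam.le)
    refine (EReal.coe_ennreal_le_coe_ennreal_iff.2 hW).trans ?_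
    rw [EReal.coe_ennreal_ofReal, max_eq_left (by positivity)]
  refine le_trans ?_ (EReal.sub_le_sub le_rfl hW')
  simp only [← EReal.coe_sub, ← EReal_coe_sum, ← EReal.coe_mul]
  rw [EReal.coe_le_coe_iff, mul_left_comm, ← mul_sub, Finset.mul_sum _ _ lam,
    ← Finset.sum_sub_distrib]
  refine mul_le_mul_of_nonneg_left (Finset.sum_le_sum fun i _ => ?_) hn'.le
  have h := hFY i (y i - ⟪θ, z i⟫)
  have hin : ⟪θ, z i⟫ = ⟪θ, x i⟫ - u i / (2 * lam) * ‖θ‖ ^ 2 := by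
    simp [hz, inner_sub_right, inner_smul_right]
  rw [hzx]
  have e : u i ^ 2 / (4 * lam) * ‖θ‖ ^ 2
      = u i * (u i / (2 * lam) * ‖θ‖ ^ 2) - lam * ((u i / (2 * lam)) ^ 2 * ‖θ‖ ^ 2) := by
    field_simp
    ring
  rw [e]
  have h4 : (y i - ⟪θ, z i⟫) * u i
      = u i * (y i - ⟪θ, x i⟫) + u i * (u i / (2 * lam) * ‖θ‖ ^ 2) := by
    rw [hin]; ring
  linarith

lemma ae_empiricalMeasure {d n : ℕ} (x : Fin n → EuclideanSpace ℝ (Fin d)) (y : Fin n → ℝ) :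
    ∀ᵐ w ∂(empiricalMeasure x y), ∃ i, w = (x i, y i) := by
  have hm : MeasurableSet {w : EuclideanSpace ℝ (Fin d) × ℝ | ∃ i, w = (x i, y i)} := by
    have : {w : EuclideanSpace ℝ (Fin d) × ℝ | ∃ i, w = (x i, y i)}
        = Set.range fun i => (x i, y i) := by
      ext w; simp [eq_comm]
    rw [this]
    exact (Set.finite_range _).measurableSet
  refine Measure.ae_smul_measure ?_ _
  rw [ae_iff, Measure.finsetSum_apply]
  refine Finset.sum_eq_zero fun i _ => ?_
  rw [← ae_iff, ae_dirac_iff hm]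
  exact ⟨i, rfl⟩

/-- If no displacement of the atoms gives more than `R`, then neither does any coupling of finite
cost: `h` below is the value of the best displacement of a single point, and
`loss ≤ h + λ cost` holds almost surely. -/
lemma integral_le_of_coupling {d n : ℕ} (hn : 0 < n) (x : Fin n → EuclideanSpace ℝ (Fin d))
    (y : Fin n → ℝ) {lam : ℝ} {L : ℝ → ℝ} (hL : ConvexOn ℝ Set.univ L)
    (hLc : Continuous L) (θ : EuclideanSpace ℝ (Fin d)) (R : ℝ)
    (hR : ∀ z : Fin n → EuclideanSpace ℝ (Fin d),
      (n : ℝ)⁻¹ * ∑ i, (L (y i - ⟪θ, z i⟫) - lam * ‖z i - x i‖ ^ 2) ≤ R)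
    (Q : Measure (EuclideanSpace ℝ (Fin d) × ℝ))
    (γ : Measure ((EuclideanSpace ℝ (Fin d) × ℝ) × (EuclideanSpace ℝ (Fin d) × ℝ)))
    (hγ : γ ∈ couplings Q (empiricalMeasure x y))
    (hfin : ∫⁻ z, droCost 2 d z.1 z.2 ∂γ ≠ ⊤) :
    ∫ z, L (z.2 - ⟪θ, z.1⟫) ∂Q ≤ R + lam * (∫⁻ z, droCost 2 d z.1 z.2 ∂γ).toReal := by
  classical
  obtain ⟨hγ1, hγ2⟩ := hγ
  have hn' : (0 : ℝ) < n := by exact_mod_cast hn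
  set val : EuclideanSpace ℝ (Fin d) × ℝ → EuclideanSpace ℝ (Fin d) → ℝ :=
    fun w z => L (w.2 - ⟪θ, z⟫) - lam * ‖z - w.1‖ ^ 2 with hval
  set h : EuclideanSpace ℝ (Fin d) × ℝ → ℝ := fun w => ⨆ z, val w z with hh
  -- fixing all displacements but the `i`-th bounds the single-point problem at the `i`-th atom
  have hbdd : ∀ i, BddAbove (Set.range (val (x i, y i))) := by
    intro i
    refine ⟨n * R - ∑ j ∈ Finset.univ.erase i, val (x j, y j) 0, ?_⟩
    rintro _ ⟨z, rfl⟩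
    have h1 := hR (Function.update (fun _ => 0) i z)
    rw [inv_mul_le_iff₀ hn', ← Finset.add_sum_erase _ _ (Finset.mem_univ i)] at h1
    have h2 : ∑ j ∈ Finset.univ.erase i,
        (L (y j - ⟪θ, (Function.update (fun _ => 0) i z : Fin n → EuclideanSpace ℝ (Fin d)) j⟫)
          - lam * ‖(Function.update (fun _ => 0) i z : Fin n → EuclideanSpace ℝ (Fin d)) j
            - x j‖ ^ 2) = ∑ j ∈ Finset.univ.erase i, val (x j, y j) 0 := by
      refine Finset.sum_congr rfl fun j hj => ?_
      rw [Function.update_of_ne (Finset.ne_of_mem_erase hj)]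
    rw [h2, Function.update_self] at h1
    simp only [hval] at h1 ⊢
    linarith
  have hsum : (n : ℝ)⁻¹ * ∑ i, h (x i, y i) ≤ R := by
    refine le_of_forall_pos_le_add fun ε hε => ?_
    choose z hz using fun i => exists_lt_of_lt_ciSup (sub_lt_self (h (x i, y i)) hε)
    have h1 := hR z
    have h2 : ∑ i, (h (x i, y i) - ε) ≤ ∑ i, val (x i, y i) (z i) :=
      Finset.sum_le_sum fun i _ => (hz i).le
    rw [inv_mul_le_iff₀ hn'] at h1 ⊢
    simp only [Finset.sum_sub_distrib, Finset.sum_const, Finset.card_univ, Fintype.card_fin,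
      nsmul_eq_mul] at h2
    simp only [hval] at h2
    linarith
  have hmc := measurable_droCost 2 d
  have hct : ∀ᵐ z ∂γ, droCost 2 d z.1 z.2 < ⊤ := ae_lt_top hmc hfin
  have hy : ∀ᵐ z ∂γ, z.1.2 = z.2.2 := by
    filter_upwards [hct] with z hz
    by_contra hne
    have : 0 < |z.1.2 - z.2.2| := abs_pos.2 (sub_ne_zero.2 hne)
    have h0 : ENNReal.ofReal |z.1.2 - z.2.2| ≠ 0 := (ENNReal.ofReal_pos.2 this).ne'
    simp [droCost, ENNReal.top_mul h0] at hz
  have hcost : (fun z => (droCost 2 d z.1 z.2).toReal) =ᵐ[γ] fun z => ‖z.1.1 - z.2.1‖ ^ 2 := by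
    filter_upwards [hy] with z hz
    simp [droCost, hz]
  have hint1 : Integrable (fun z => ‖z.1.1 - z.2.1‖ ^ 2) γ :=
    (integrable_toReal_of_lintegral_ne_top hmc.aemeasurable hfin).congr hcost
  have hval1 : ∫ z, ‖z.1.1 - z.2.1‖ ^ 2 ∂γ = (∫⁻ z, droCost 2 d z.1 z.2 ∂γ).toReal := by
    rw [← integral_congr_ae hcost, integral_toReal hmc.aemeasurable hct]
  have hpull : ∀ f : EuclideanSpace ℝ (Fin d) × ℝ → ℝ, Integrable (fun z => f z.2) γ := by
    intro f
    have := integrable_empiricalMeasure hn x y f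
    rw [← hγ2] at this
    exact this.comp_measurable measurable_snd
  have hatom : ∀ᵐ z ∂γ, ∃ i, z.2 = (x i, y i) := by
    have := ae_empiricalMeasure x y
    rw [← hγ2] at this
    exact ae_of_ae_map measurable_snd.aemeasurable this
  have hup : ∀ᵐ z ∂γ, L (z.1.2 - ⟪θ, z.1.1⟫) ≤ h z.2 + lam * ‖z.1.1 - z.2.1‖ ^ 2 := by
    filter_upwards [hy, hatom] with z hz ⟨i, hi⟩
    have := le_ciSup (hbdd i) z.1.1
    rw [← hi] at this
    change val z.2 z.1.1 ≤ h z.2 at this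
    simp only [hval] at this
    rw [hz]
    linarith
  -- the supporting line of `L` at `0`, with `‖w‖ ≤ 1 + ‖w‖²`, minorises the loss
  obtain ⟨v, hv⟩ := exists_subgradient hL 0
  have hlow : ∀ᵐ z ∂γ, (v * (z.2.2 - ⟪θ, z.2.1⟫) + L 0 - |v| * ‖θ‖)
      + (-(|v| * ‖θ‖)) * ‖z.1.1 - z.2.1‖ ^ 2 ≤ L (z.1.2 - ⟪θ, z.1.1⟫) := by
    filter_upwards [hy] with z hz
    have h1 := hv (z.1.2 - ⟪θ, z.1.1⟫)
    have h2 : v * ⟪θ, z.1.1 - z.2.1⟫ ≤ |v| * ‖θ‖ * (1 + ‖z.1.1 - z.2.1‖ ^ 2) := by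
      refine (le_abs_self _).trans ?_
      rw [abs_mul, mul_assoc]
      refine mul_le_mul_of_nonneg_left ?_ (abs_nonneg v)
      refine (abs_real_inner_le_norm _ _).trans (mul_le_mul_of_nonneg_left ?_ (norm_nonneg θ))
      nlinarith [sq_nonneg (‖z.1.1 - z.2.1‖ - 1), sq_nonneg ‖z.1.1 - z.2.1‖]
    rw [inner_sub_right] at h2
    rw [hz] at h1 ⊢
    linarith
  have hLm : Continuous fun z : EuclideanSpace ℝ (Fin d) × ℝ => L (z.2 - ⟪θ, z.1⟫) := by
    fun_prop
  have hupint : Integrable (fun z => h z.2 + lam * ‖z.1.1 - z.2.1‖ ^ 2) γ :=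
    (hpull h).add (hint1.const_mul lam)
  have hLint : Integrable (fun z : (EuclideanSpace ℝ (Fin d) × ℝ) ×
      (EuclideanSpace ℝ (Fin d) × ℝ) => L (z.1.2 - ⟪θ, z.1.1⟫)) γ :=
    integrable_of_le_of_le (hLm.comp continuous_fst).aestronglyMeasurable hlow hup
      ((hpull fun w => v * (w.2 - ⟪θ, w.1⟫) + L 0 - |v| * ‖θ‖).add (hint1.const_mul _)) hupint
  calc ∫ z, L (z.2 - ⟪θ, z.1⟫) ∂Q = ∫ z, L (z.1.2 - ⟪θ, z.1.1⟫) ∂γ := by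
        rw [← hγ1, integral_map measurable_fst.aemeasurable hLm.aestronglyMeasurable]
    _ ≤ ∫ z, (h z.2 + lam * ‖z.1.1 - z.2.1‖ ^ 2) ∂γ := integral_mono_ae hLint hupint hup
    _ = (n : ℝ)⁻¹ * ∑ i, h (x i, y i) + lam * (∫⁻ z, droCost 2 d z.1 z.2 ∂γ).toReal := by
        rw [integral_add (hpull h) (hint1.const_mul lam), integral_const_mul, hval1,
          ← integral_empiricalMeasure x y h]
        congr 1
        have hm := (integrable_empiricalMeasure hn x y h).aestronglyMeasurable
        rw [← hγ2] at hm ⊢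
        rw [integral_map measurable_snd.aemeasurable hm]
    _ ≤ _ := by linarith

/-- Infimum over couplings in `integral_le_of_coupling`. -/
lemma dreObjE_le_of_atoms {d n : ℕ} (hn : 0 < n) (x : Fin n → EuclideanSpace ℝ (Fin d))
    (y : Fin n → ℝ) {lam : ℝ} (hlam : 0 < lam) {L : ℝ → ℝ} (hL : ConvexOn ℝ Set.univ L)
    (hLc : Continuous L) (θ : EuclideanSpace ℝ (Fin d)) (R : ℝ)
    (hR : ∀ z : Fin n → EuclideanSpace ℝ (Fin d),
      (n : ℝ)⁻¹ * ∑ i, (L (y i - ⟪θ, z i⟫) - lam * ‖z i - x i‖ ^ 2) ≤ R) :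
    dreObjE x y lam L θ ≤ R := by
  refine iSup_le fun ⟨Q, hQ⟩ => ?_
  set I : ℝ := ∫ z, L (z.2 - ⟪θ, z.1⟫) ∂Q with hI
  have hW : ENNReal.ofReal ((I - R) / lam)
      ≤ transportDiscrepancy (droCost 2 d) Q (empiricalMeasure x y) := by
    refine le_iInf₂ fun γ hγ => ?_
    by_cases hfin : ∫⁻ z, droCost 2 d z.1 z.2 ∂γ = ⊤
    · simp [hfin]
    · have := integral_le_of_coupling hn x y hL hLc θ R hR Q γ hγ hfin
      refine (ENNReal.ofReal_le_iff_le_toReal hfin).2 ?_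
      rw [div_le_iff₀ hlam]
      linarith
  have hW' : ((I - R : ℝ) : EReal) ≤ (lam : EReal) *
      (transportDiscrepancy (droCost 2 d) Q (empiricalMeasure x y)).toEReal := by
    have e : I - R = lam * ((I - R) / lam) := by field_simp
    rw [e, EReal.coe_mul]
    refine mul_le_mul_of_nonneg_left (le_trans ?_ (EReal.coe_ennreal_le_coe_ennreal_iff.2 hW))
      (by exact_mod_cast hlam.le)
    rw [EReal.coe_ennreal_ofReal]
    exact le_max_left ((((I - R) / lam : ℝ)) : EReal) 0
  refine (EReal.sub_le_sub le_rfl hW').trans ?_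
  rw [← EReal.coe_sub]
  exact_mod_cast (by linarith : I - (I - R) ≤ R)

/-- Lemma: minimax reformulation of the distributionally regularized
problem.  For a proper continuous convex loss `L` and `λ > 0`, the optimal value of
`min_{θ∈Θ} sup_Q E_Q[L(Y − θᵀX)] − λ W_c(Q, P_n)` (type-2 cost) equals the optimal value of
`min_{θ∈Θ} sup_{u∈ℝⁿ} (1/n)∑ᵢ [uᵢ(yᵢ − θᵀxᵢ) + (uᵢ²/(4λ))‖θ‖² − L*(uᵢ)]`. -/
theorem dre_dual_minimax_p2
    {d n : ℕ} (hn : 0 < n)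
    (x : Fin n → EuclideanSpace ℝ (Fin d)) (y : Fin n → ℝ)
    (Θ : Set (EuclideanSpace ℝ (Fin d))) (hΘ : Θ.Nonempty)
    (lam : ℝ) (hlam : 0 < lam)
    (L : ℝ → ℝ) (hLconv : ConvexOn ℝ Set.univ L) (hLcont : Continuous L) :
    (⨅ (θ : Θ), dreObjE x y lam L θ) =
      ⨅ (θ : Θ), ⨆ (u : EuclideanSpace ℝ (Fin n)),
        ((((n : ℝ)⁻¹ : ℝ) : EReal) *
          ∑ i, ((((u i) * (y i - ⟪(θ : EuclideanSpace ℝ (Fin d)), x i⟫)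
                  + (u i) ^ 2 / (4 * lam) * ‖(θ : EuclideanSpace ℝ (Fin d))‖ ^ 2 : ℝ) : EReal)
                - conjE L (u i))) := by
  refine iInf_congr fun θ => le_antisymm ?_ (iSup_le fun u => ?_)
  · have hat := atoms_le_dual x y hlam hLconv (θ : EuclideanSpace ℝ (Fin d))
    revert hat
    generalize (⨆ (u : EuclideanSpace ℝ (Fin n)),
        ((((n : ℝ)⁻¹ : ℝ) : EReal) *
          ∑ i, ((((u i) * (y i - ⟪(θ : EuclideanSpace ℝ (Fin d)), x i⟫)
                  + (u i) ^ 2 / (4 * lam) * ‖(θ : EuclideanSpace ℝ (Fin d))‖ ^ 2 : ℝ) : EReal)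
                - conjE L (u i)))) = R
    intro hat
    induction R with
    | bot => exact absurd (le_bot_iff.1 (hat 0)) (EReal.coe_ne_bot _)
    | top => exact le_top
    | coe R =>
      exact dreObjE_le_of_atoms hn x y hlam hLconv hLcont θ R fun z =>
        EReal.coe_le_coe_iff.1 (hat z)
  · exact dual_le_dreObjE hn x y hlam L θ u
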